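/- For every real μ > 0 and every exponent k ≥ 1 there exists a constant c₈ > 0 such that for all n ≥ 2 and every M with n ≤ M ≤ n^k, setting β = μ/n, the Flat-tempering chain for the 3-state mean-field Potts model on n vertices with the entropy-dampening distributions ρ₀,…,ρ_M has mixing time τ(ε) ≤ n^{c₈}·(1 + ln(1/ε)) for every ε ∈ (0,1). -/

import Mathlib

/-!
The chain satisfies a Poincaré inequality with a polynomial constant, and a Poincaré inequality
together with a holding probability of at least `1/6` gives geometric decay of the variance
(`variance_step`, `poincare_mixing`). Since `ln(1/π_min)` is polynomial in `n`, this bounds the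
mixing time.

The Poincaré inequality (`flatChain_poincare`) comes from canonical paths to the single reference
state with all vertices of color `0` at level `0`: the variance of `f` is at most the mean square
deviation of `f` from its value there.

* Descent in the level. Let `W` be the Gibbs mass of a color class (`classMass`). At level `i` a
  class has mass `W ^ (i/M) / Z_i`. If `m` is the largest class mass, then
  `m ^ (i/M) ≤ Z_i ≤ (n+1)³ m ^ (i/M)`, because there are at most `(n+1)³` classes. As `W/m ≤ 1`,
  lowering the level loses at most the factor `(n+1)³` in probability (`pottsRho_le_of_le`), so the
  paths `(x,i) → (x,i-1) → ⋯ → (x,0)` have polynomial congestion (`descent_bound`).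
* Level `0`. Here all color classes are equally likely. From `x` the vertices are recolored to `0`
  one after another, and the path is averaged over all permutations of the vertices. Every
  intermediate configuration is then uniform in its color class, so that the averaged path visits
  `y` with probability at most `flatWeight n y = σ₁!σ₂!σ₃!/n!` (`perm_average_le`), which is
  proportional to the stationary weight at level `0`. This gives `flat_level_poincare`.
-/

open Finset

noncomputable section

/-- The mixing time of a Markov chain with transition matrix `P` and target
distribution `π`: the least `t` such that for all `t' ≥ t` the total variation
distance of the `t'`-step distribution from `π` is at most `ε`, from every start. -/
noncomputable def mixingTime {S : Type} [Fintype S] [DecidableEq S]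
    (P : Matrix S S ℝ) (π : S → ℝ) (ε : ℝ) : ℕ :=
  sInf {t : ℕ | ∀ t' : ℕ, t ≤ t' → ∀ x : S,
    (1/2) * ∑ y : S, |(P ^ t') x y - π y| ≤ ε}

/-- The Metropolis chain with proposal kernel `Q` and target distribution `π`. -/
noncomputable def metropolis {S : Type} [Fintype S] [DecidableEq S]
    (Q : S → S → ℝ) (π : S → ℝ) : Matrix S S ℝ :=
  Matrix.of fun x y =>
    if y = x then 1 - ∑ z ∈ Finset.univ.erase x, Q x z * min 1 (π z / π x)
    else Q x y * min 1 (π y / π x)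

/-- Off-diagonal transition rates of the simulated tempering chain. -/
noncomputable def temperingOff {S : Type} [Fintype S] [DecidableEq S] {M : ℕ}
    (Mk : Fin (M+1) → Matrix S S ℝ) (π : Fin (M+1) → S → ℝ)
    (p q : S × Fin (M+1)) : ℝ :=
  (if q.2 = p.2 then (1/2) * Mk p.2 p.1 q.1 else 0) +
  (if q.1 = p.1 ∧ ((q.2 : ℕ) = (p.2 : ℕ) + 1 ∨ (q.2 : ℕ) + 1 = (p.2 : ℕ)) then
    (1/4) * min 1 (π q.2 p.1 / π p.2 p.1) else 0)

/-- The simulated tempering chain built from level Metropolis kernels `Mk` and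
the tempering distributions `π`. -/
noncomputable def temperingChain {S : Type} [Fintype S] [DecidableEq S] {M : ℕ}
    (Mk : Fin (M+1) → Matrix S S ℝ) (π : Fin (M+1) → S → ℝ) :
    Matrix (S × Fin (M+1)) (S × Fin (M+1)) ℝ :=
  Matrix.of fun p q =>
    if q = p then 1 - ∑ r ∈ Finset.univ.erase p, temperingOff Mk π p r
    else temperingOff Mk π p q

/-- Conductance of a chain `(P, π)`. -/
noncomputable def conductance {S : Type} [Fintype S] [DecidableEq S]
    (P : Matrix S S ℝ) (π : S → ℝ) : ℝ :=
  sInf {r : ℝ | ∃ A : Finset S, 0 < ∑ x ∈ A, π x ∧ (∑ x ∈ A, π x) ≤ 1/2 ∧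
    r = (∑ x ∈ A, ∑ y ∈ Aᶜ, π x * P x y) / ∑ x ∈ A, π x}

/-- Potts Hamiltonian. -/
def pottsH (n : ℕ) (x : Fin n → Fin 3) : ℕ :=
  (Finset.univ.filter (fun p : Fin n × Fin n => p.1 < p.2 ∧ x p.1 = x p.2)).card

/-- Gibbs distribution of the mean-field 3-state Potts model. -/
noncomputable def pottsGibbs (n : ℕ) (β : ℝ) (x : Fin n → Fin 3) : ℝ :=
  Real.exp (β * pottsH n x) / ∑ y : Fin n → Fin 3, Real.exp (β * pottsH n y)

/-- Proposal: recolor a uniformly random vertex with a uniformly random color. -/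
noncomputable def pottsProp (n : ℕ) (x y : Fin n → Fin 3) : ℝ :=
  ((Finset.univ.filter
    (fun vc : Fin n × Fin 3 => Function.update x vc.1 vc.2 = y)).card : ℝ) / (n * 3)


/-- Number of vertices of color `j`. -/
def colorCount (n : ℕ) (x : Fin n → Fin 3) (j : Fin 3) : ℕ :=
  (Finset.univ.filter (fun i => x i = j)).card

/-- Unnormalized entropy-dampening distribution for the 3-state Potts model:
`ρ_i(x) ∝ e^(β_i H(x))·(n!/(σ₁!σ₂!σ₃!))^((i−M)/M)` with `β_i = i·β/M`. -/
noncomputable def pottsRhoUn (n M : ℕ) (β : ℝ) (i : Fin (M+1))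
    (x : Fin n → Fin 3) : ℝ :=
  Real.exp (((i : ℕ) : ℝ) * β / M * (pottsH n x : ℝ)) *
    ((n.factorial : ℝ) /
        (((colorCount n x 0).factorial : ℝ) * ((colorCount n x 1).factorial : ℝ) *
          ((colorCount n x 2).factorial : ℝ))) ^ ((((i : ℕ) : ℝ) - M) / M)

/-- Normalized entropy-dampening distribution for the 3-state Potts model. -/
noncomputable def pottsRho (n M : ℕ) (β : ℝ) (i : Fin (M+1))
    (x : Fin n → Fin 3) : ℝ :=
  pottsRhoUn n M β i x / ∑ y : Fin n → Fin 3, pottsRhoUn n M β i y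

end

/-! ### Poincaré inequality implies mixing -/

section Abstract
variable {S : Type} [Fintype S]

/-- Detailed balance implies that one step preserves means. -/
theorem reversible_stationary {P : Matrix S S ℝ} {π : S → ℝ}
    (hrow : ∀ x, ∑ y, P x y = 1) (hrev : ∀ x y, π x * P x y = π y * P y x) (f : S → ℝ) :
    ∑ x, π x * ∑ y, P x y * f y = ∑ y, π y * f y := by
  simp only [mul_sum]
  rw [sum_comm]
  refine sum_congr rfl fun y _ => ?_
  have : ∀ x, π x * (P x y * f y) = π y * f y * P y x := fun x => by
    rw [← mul_assoc, hrev]; ring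
  simp only [this, ← mul_sum, hrow, mul_one]

variable [DecidableEq S]

/-- The variance of `f` under a probability vector `w` is at least `w x` times the mean square
deviation of `f` from `f x`, by Cauchy–Schwarz over the points other than `x`. It replaces the
spectral argument: holding probability turns a Dirichlet form bound into a contraction. -/
theorem row_variance {w f : S → ℝ} (hw : ∀ y, 0 ≤ w y) (hs : ∑ y, w y = 1) (x : S) :
    (∑ y, w y * f y) ^ 2 ≤ ∑ y, w y * f y ^ 2 - w x * ∑ y, w y * (f x - f y) ^ 2 := by
  have h1 : ∑ y, w y * f y - f x = ∑ y ∈ univ.erase x, w y * (f y - f x) := by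
    have : ∑ y ∈ univ.erase x, w y * (f y - f x) = ∑ y, w y * (f y - f x) := by
      rw [← Finset.add_sum_erase univ _ (mem_univ x)]; simp
    rw [this]
    simp only [mul_sub, sum_sub_distrib, ← sum_mul, hs, one_mul]
  have h2 : ∑ y ∈ univ.erase x, w y * (f y - f x) ^ 2 = ∑ y, w y * (f x - f y) ^ 2 := by
    rw [← Finset.add_sum_erase univ (fun y => w y * (f x - f y) ^ 2) (mem_univ x)]
    simp only [sub_self, ne_eq, OfNat.ofNat_ne_zero, not_false_eq_true, zero_pow, mul_zero,
      zero_add]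
    exact sum_congr rfl fun y _ => by ring
  have h3 : ∑ y ∈ univ.erase x, w y = 1 - w x := by
    rw [← hs, ← Finset.add_sum_erase univ _ (mem_univ x)]; ring
  have h4 : (∑ y ∈ univ.erase x, w y * (f y - f x)) ^ 2 ≤
      (∑ y ∈ univ.erase x, w y) * ∑ y ∈ univ.erase x, w y * (f y - f x) ^ 2 := by
    apply Finset.sum_sq_le_sum_mul_sum_of_sq_le_mul
    · exact fun i _ => hw i
    · exact fun i _ => mul_nonneg (hw i) (sq_nonneg _)
    · intro i _; exact le_of_eq (by ring)
  rw [← h1, h2, h3] at h4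
  have h5 : ∑ y, w y * (f x - f y) ^ 2 =
      f x ^ 2 - 2 * f x * ∑ y, w y * f y + ∑ y, w y * f y ^ 2 := by
    have : ∀ y, w y * (f x - f y) ^ 2 =
        w y * f x ^ 2 - 2 * f x * (w y * f y) + w y * f y ^ 2 := fun y => by ring
    simp only [this, sum_add_distrib, sum_sub_distrib, ← sum_mul, hs, one_mul, ← mul_sum]
  nlinarith

/-- One step of a reversible chain with holding probabilities at least `1/6` and Poincaré constant
`C` contracts the `L²(π)` norm of centered functions. -/
theorem variance_step {P : Matrix S S ℝ} {π : S → ℝ} {C : ℝ}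
    (hπ : ∀ x, 0 < π x) (hπs : ∑ x, π x = 1)
    (hP : ∀ x y, 0 ≤ P x y) (hrow : ∀ x, ∑ y, P x y = 1)
    (hrev : ∀ x y, π x * P x y = π y * P y x) (hlazy : ∀ x, 1 / 6 ≤ P x x) (hC : 0 < C)
    (hpoin : ∀ f : S → ℝ, ∃ c : ℝ, ∑ x, π x * (f x - c) ^ 2 ≤
      C * ∑ x, ∑ y, π x * P x y * (f x - f y) ^ 2)
    (f : S → ℝ) (hf : ∑ x, π x * f x = 0) :
    ∑ x, π x * (P.mulVec f x) ^ 2 ≤ Real.exp (-(1 / (6 * C))) * ∑ x, π x * f x ^ 2 := by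
  set D := ∑ x, ∑ y, π x * P x y * (f x - f y) ^ 2 with hD
  obtain ⟨c, hc⟩ := hpoin f
  have h1 : ∑ x, π x * f x ^ 2 ≤ C * D := by
    refine le_trans ?_ hc
    have : ∀ x, π x * (f x - c) ^ 2 = π x * f x ^ 2 - 2 * c * (π x * f x) + π x * c ^ 2 :=
      fun x => by ring
    simp only [this, sum_add_distrib, sum_sub_distrib, ← mul_sum, hf, ← sum_mul, hπs]
    nlinarith [sq_nonneg c]
  have h2 : ∑ x, π x * (P.mulVec f x) ^ 2 ≤ ∑ x, π x * f x ^ 2 - 1 / 6 * D := by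
    rw [← reversible_stationary hrow hrev (fun y => f y ^ 2), hD, mul_sum, ← sum_sub_distrib]
    refine sum_le_sum fun x _ => ?_
    have := row_variance (f := f) (hP x) (hrow x) x
    have h0 : 0 ≤ ∑ y, P x y * (f x - f y) ^ 2 :=
      sum_nonneg fun y _ => mul_nonneg (hP x y) (sq_nonneg _)
    have h3 : ∑ y, π x * P x y * (f x - f y) ^ 2 = π x * ∑ y, P x y * (f x - f y) ^ 2 := by
      rw [mul_sum]; exact sum_congr rfl fun y _ => by ring
    rw [h3]
    have h4 : (P.mulVec f x) ^ 2 ≤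
        ∑ y, P x y * f y ^ 2 - 1 / 6 * ∑ y, P x y * (f x - f y) ^ 2 := by
      have : P.mulVec f x = ∑ y, P x y * f y := rfl
      rw [this]
      nlinarith [hlazy x]
    nlinarith [hπ x]
  have h5 : 1 - 1 / (6 * C) ≤ Real.exp (-(1 / (6 * C))) := by
    have := Real.add_one_le_exp (-(1 / (6 * C))); linarith
  have h6 : 0 ≤ ∑ x, π x * f x ^ 2 := sum_nonneg fun x _ => mul_nonneg (hπ x).le (sq_nonneg _)
  have h7 : 1 / (6 * C) * ∑ x, π x * f x ^ 2 ≤ 1 / 6 * D := by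
    calc 1 / (6 * C) * ∑ x, π x * f x ^ 2 ≤ 1 / (6 * C) * (C * D) := by gcongr
      _ = 1 / 6 * D := by field_simp
  nlinarith

/-- A Poincaré inequality with holding probability `1/6` bounds the distance to stationarity by `ε`
as soon as `t ≥ 6C(ln(1/π_min) + 2 ln(1/ε))`, where `e^{-a}` is a lower bound for `π_min`. -/
theorem poincare_mixing {P : Matrix S S ℝ} {π : S → ℝ} {C a : ℝ}
    (hπ : ∀ x, 0 < π x) (hπs : ∑ x, π x = 1)
    (hP : ∀ x y, 0 ≤ P x y) (hrow : ∀ x, ∑ y, P x y = 1)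
    (hrev : ∀ x y, π x * P x y = π y * P y x) (hlazy : ∀ x, 1 / 6 ≤ P x x) (hC : 0 < C)
    (hpoin : ∀ f : S → ℝ, ∃ c : ℝ, ∑ x, π x * (f x - c) ^ 2 ≤
      C * ∑ x, ∑ y, π x * P x y * (f x - f y) ^ 2)
    (ha : ∀ x, Real.exp (-a) ≤ π x) {ε : ℝ} (hε : 0 < ε) (t : ℕ)
    (ht : 6 * C * (a + 2 * Real.log (1 / ε)) ≤ t) (x : S) :
    (1 / 2) * ∑ y, |(P ^ t) x y - π y| ≤ ε := by
  have hiter : ∀ f : S → ℝ, ∑ x, π x * f x = 0 → ∀ t : ℕ,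
      ∑ x, π x * ((P ^ t).mulVec f x) = 0 ∧
      ∑ x, π x * ((P ^ t).mulVec f x) ^ 2 ≤
        Real.exp (-(t / (6 * C))) * ∑ x, π x * f x ^ 2 := by
    intro f hf t
    induction t with
    | zero => simp [hf]
    | succ t ih =>
      rw [pow_succ', ← Matrix.mulVec_mulVec]
      refine ⟨?_, ?_⟩
      · rw [← ih.1]; exact reversible_stationary hrow hrev _
      · refine (variance_step hπ hπs hP hrow hrev hlazy hC hpoin _ ih.1).trans ?_
        refine (mul_le_mul_of_nonneg_left ih.2 (Real.exp_pos _).le).trans (le_of_eq ?_)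
        rw [← mul_assoc, ← Real.exp_add]
        congr 2; push_cast; ring
  have hrowt : ∀ t : ℕ, (P ^ t).mulVec (fun _ => 1) = fun _ => 1 := by
    intro t
    induction t with
    | zero => simp
    | succ t ih =>
      rw [pow_succ, ← Matrix.mulVec_mulVec]
      have : P.mulVec (fun _ => 1) = fun _ => 1 := by
        funext x; simp [Matrix.mulVec, dotProduct, hrow]
      rw [this, ih]
  -- test function: the sign pattern of the discrepancy at the starting point
  let s : S → ℝ := fun y => SignType.sign ((P ^ t) x y - π y)
  have hs2 : ∀ y, s y ^ 2 ≤ 1 := by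
    intro y
    simp only [s]
    rcases lt_trichotomy ((P ^ t) x y - π y) 0 with h | h | h <;> simp [h]
  set m := ∑ y, π y * s y with hm
  let g : S → ℝ := fun y => s y - m
  have hg0 : ∑ y, π y * g y = 0 := by
    simp only [g, mul_sub, sum_sub_distrib, ← sum_mul, hπs]; simp [hm]
  have hg2 : ∑ y, π y * g y ^ 2 ≤ 1 := by
    have h : ∀ y, π y * g y ^ 2 = π y * s y ^ 2 - 2 * m * (π y * s y) + π y * m ^ 2 :=
      fun y => by simp only [g]; ring
    simp only [h, sum_add_distrib, sum_sub_distrib, ← mul_sum, ← sum_mul, hπs, ← hm]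
    have : ∑ y, π y * s y ^ 2 ≤ ∑ y, π y :=
      sum_le_sum fun y _ => by nlinarith [hπ y, hs2 y]
    rw [hπs] at this
    nlinarith [sq_nonneg m]
  have hval : (P ^ t).mulVec g x = ∑ y, |(P ^ t) x y - π y| := by
    have h1 : g = s - m • (fun _ => (1 : ℝ)) := by funext y; simp [g]
    rw [h1, Matrix.mulVec_sub, Matrix.mulVec_smul, hrowt]
    simp only [Pi.sub_apply, Pi.smul_apply, smul_eq_mul, mul_one, hm, Matrix.mulVec, dotProduct,
      ← sum_sub_distrib]
    refine sum_congr rfl fun y _ => ?_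
    rw [← sub_mul]
    simp only [s]
    exact self_mul_sign _
  have hvar := (hiter g hg0 t).2
  have hx : π x * ((P ^ t).mulVec g x) ^ 2 ≤ Real.exp (-(t / (6 * C))) := by
    calc π x * ((P ^ t).mulVec g x) ^ 2
        ≤ ∑ x, π x * ((P ^ t).mulVec g x) ^ 2 :=
          single_le_sum (f := fun x => π x * ((P ^ t).mulVec g x) ^ 2)
            (fun y _ => mul_nonneg (hπ y).le (sq_nonneg _)) (mem_univ x)
      _ ≤ _ := hvar
      _ ≤ Real.exp (-(t / (6 * C))) * 1 := by gcongr
      _ = _ := mul_one _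
  rw [hval] at hx
  set T := ∑ y, |(P ^ t) x y - π y| with hT
  have hT0 : 0 ≤ T := sum_nonneg fun _ _ => abs_nonneg _
  have h1 : a + 2 * Real.log (1 / ε) ≤ t / (6 * C) := by
    rw [le_div_iff₀ (by positivity)]; linarith
  have h2 : Real.exp (-(t / (6 * C))) ≤ Real.exp (-a) * ε ^ 2 := by
    have : ε ^ 2 = Real.exp (2 * Real.log ε) := by
      rw [two_mul, Real.exp_add, Real.exp_log hε]; ring
    rw [this, ← Real.exp_add]
    apply Real.exp_le_exp.mpr
    rw [one_div, Real.log_inv] at h1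
    linarith
  have h3 : T ^ 2 ≤ ε ^ 2 := by
    have h4 : Real.exp (-a) * T ^ 2 ≤ Real.exp (-a) * ε ^ 2 :=
      (mul_le_mul_of_nonneg_right (ha x) (sq_nonneg T)).trans (hx.trans h2)
    exact le_of_mul_le_mul_left h4 (Real.exp_pos _)
  have h4 : T ≤ ε := abs_le_of_sq_le_sq' h3 hε.le |>.2
  linarith

end Abstract

/-! ### Permutations of vertices and the flat weight -/

/-- The product `σ₁!σ₂!σ₃!` of the factorials of the color counts: the number of vertex
permutations fixing the configuration `x`. -/
def facProd (n : ℕ) (x : Fin n → Fin 3) : ℕ := ∏ c : Fin 3, (colorCount n x c).factorial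

theorem facProd_pos (n : ℕ) (x : Fin n → Fin 3) : 0 < facProd n x :=
  Finset.prod_pos fun _ _ => Nat.factorial_pos _

theorem card_stabilizer (n : ℕ) (y : Fin n → Fin 3) :
    (univ.filter fun p : Equiv.Perm (Fin n) => y ∘ p = y).card = facProd n y := by
  rw [← Fintype.card_subtype, DomMulAct.stabilizer_card]
  simp only [facProd, colorCount, Fintype.card_subtype]

/-- The permutations carrying `z` to `y` are empty or a coset of the stabilizer of `y`. -/
theorem card_transporter_le (n : ℕ) (z y : Fin n → Fin 3) :
    (univ.filter fun p : Equiv.Perm (Fin n) => z ∘ p = y).card ≤ facProd n y := by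
  by_cases h : ∃ q : Equiv.Perm (Fin n), z ∘ q = y
  · obtain ⟨q, rfl⟩ := h
    rw [← card_stabilizer]
    refine card_le_card_of_injOn (fun p => q⁻¹ * p) ?_ ?_
    · intro p hp
      simp only [coe_filter, mem_univ, true_and, Set.mem_ofPred_eq] at hp ⊢
      funext v
      simpa using congrFun hp v
    · intro a _ b _ hab
      exact mul_left_cancel hab
  · push Not at h
    rw [filter_false_of_mem fun p _ => h p]
    simp

theorem facProd_le_card_transporter (n : ℕ) (z y : Fin n → Fin 3)
    (h : colorCount n y = colorCount n z) :
    facProd n y ≤ (univ.filter fun p : Equiv.Perm (Fin n) => z ∘ p = y).card := by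
  have hcard : ∀ c, Fintype.card {v // y v = c} = Fintype.card {v // z v = c} := fun c => by
    have := congrFun h c
    simpa only [colorCount, Fintype.card_subtype] using this
  let q : Equiv.Perm (Fin n) :=
    Equiv.ofFiberEquiv (f := y) (g := z) fun c => Fintype.equivOfCardEq (hcard c)
  have hq : ∀ v, z (q v) = y v := fun v => Equiv.ofFiberEquiv_map _ v
  rw [← card_stabilizer]
  refine card_le_card_of_injOn (fun p => q * p) ?_ ?_
  · intro p hp
    simp only [coe_filter, mem_univ, true_and, Set.mem_ofPred_eq] at hp ⊢
    rw [← hp]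
    funext v
    simp only [Function.comp_apply, Equiv.Perm.coe_mul, hq]
  · intro a _ b _ hab
    exact mul_left_cancel hab

theorem facProd_le (n : ℕ) (y : Fin n → Fin 3) : facProd n y ≤ n.factorial := by
  rw [← card_stabilizer]
  refine (card_le_univ _).trans ?_
  simp [Fintype.card_perm]

/-- The unnormalized weight `σ₁!σ₂!σ₃!/n!` of the infinite-temperature level `i = 0`. -/
noncomputable def flatWeight (n : ℕ) (x : Fin n → Fin 3) : ℝ := facProd n x / n.factorial

theorem flatWeight_pos (n : ℕ) (x : Fin n → Fin 3) : 0 < flatWeight n x := by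
  have := facProd_pos n x
  unfold flatWeight; positivity

theorem flatWeight_le_one (n : ℕ) (x : Fin n → Fin 3) : flatWeight n x ≤ 1 := by
  unfold flatWeight
  rw [div_le_one (by positivity)]
  exact_mod_cast facProd_le n x

/-- Averaging a nonnegative function over the permutations of any single configuration `z` costs at
most its `flatWeight` integral: a uniformly random rearrangement of `z` hits each `y` with
probability at most `flatWeight n y`. This is what spreads the canonical paths evenly. -/
theorem perm_average_le (n : ℕ) (z : Fin n → Fin 3) (F : (Fin n → Fin 3) → ℝ)
    (hF : ∀ y, 0 ≤ F y) :
    ∑ p : Equiv.Perm (Fin n), F (z ∘ p) ≤ n.factorial * ∑ y, flatWeight n y * F y := by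
  rw [← Finset.sum_fiberwise univ (fun p : Equiv.Perm (Fin n) => z ∘ p), mul_sum]
  refine sum_le_sum fun y _ => ?_
  have h1 : ∑ p ∈ univ.filter (fun p : Equiv.Perm (Fin n) => z ∘ p = y), F (z ∘ p) =
      ((univ.filter fun p : Equiv.Perm (Fin n) => z ∘ p = y).card : ℝ) * F y := by
    rw [← nsmul_eq_mul, ← sum_const]
    exact sum_congr rfl fun p hp => by rw [(mem_filter.mp hp).2]
  have h2 : (n.factorial : ℝ) * (flatWeight n y * F y) = facProd n y * F y := by
    unfold flatWeight; field_simp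
  rw [h1, h2]
  exact mul_le_mul_of_nonneg_right (by exact_mod_cast card_transporter_le n z y) (hF y)

/-- Every color class has total flat weight one, and there are at most `(n+1)³` classes. -/
theorem sum_flatWeight_le (n : ℕ) : ∑ x, flatWeight n x ≤ ((n : ℝ) + 1) ^ 3 := by
  have hlt : ∀ (x : Fin n → Fin 3) c, colorCount n x c < n + 1 := fun x c =>
    Nat.lt_succ_of_le ((card_le_univ _).trans (by simp))
  let cc : (Fin n → Fin 3) → (Fin 3 → Fin (n + 1)) := fun x c => ⟨colorCount n x c, hlt x c⟩
  rw [← Finset.sum_fiberwise univ cc]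
  have hfib : ∀ s, ∑ x with cc x = s, flatWeight n x ≤ 1 := by
    intro s
    by_cases h : ∃ z, cc z = s
    · obtain ⟨z, rfl⟩ := h
      have h1 : ∑ x with cc x = cc z, facProd n x ≤ n.factorial := by
        calc ∑ x with cc x = cc z, facProd n x
            ≤ ∑ x with cc x = cc z,
              (univ.filter fun p : Equiv.Perm (Fin n) => z ∘ p = x).card := by
              refine sum_le_sum fun x hx => facProd_le_card_transporter n z x ?_
              funext c
              have := congrFun (mem_filter.mp hx).2 c
              simpa [cc] using this
          _ ≤ ∑ x, (univ.filter fun p : Equiv.Perm (Fin n) => z ∘ p = x).card :=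
              sum_le_sum_of_subset (filter_subset _ _)
          _ = n.factorial := by
              rw [← card_eq_sum_card_fiberwise (fun _ _ => mem_univ _)]
              simp [Fintype.card_perm]
      simp only [flatWeight, ← sum_div]
      rw [div_le_one (by positivity)]
      exact_mod_cast h1
    · push Not at h
      rw [filter_false_of_mem fun x _ => h x]
      simp
  calc ∑ s, ∑ x with cc x = s, flatWeight n x ≤ ∑ s : Fin 3 → Fin (n + 1), (1 : ℝ) :=
        sum_le_sum fun s _ => hfib s
    _ = ((n : ℝ) + 1) ^ 3 := by simp

theorem colorCount_comp (n : ℕ) (x : Fin n → Fin 3) (p : Equiv.Perm (Fin n)) :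
    colorCount n (x ∘ p) = colorCount n x := by
  funext c
  unfold colorCount
  exact card_bij (fun v _ => p v) (by simp) (fun a _ b _ h => p.injective h)
    (fun b hb => ⟨p.symm b, by simpa using hb, by simp⟩)

theorem flatWeight_comp (n : ℕ) (x : Fin n → Fin 3) (p : Equiv.Perm (Fin n)) :
    flatWeight n (x ∘ p) = flatWeight n x := by
  simp only [flatWeight, facProd, colorCount_comp]

/-- Counting ordered pairs removes the dependence on the order of the vertices. -/
theorem two_mul_pottsH (n : ℕ) (x : Fin n → Fin 3) :
    2 * pottsH n x =
      (univ.filter fun q : Fin n × Fin n => q.1 ≠ q.2 ∧ x q.1 = x q.2).card := by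
  have h1 : (univ.filter fun q : Fin n × Fin n => q.1 ≠ q.2 ∧ x q.1 = x q.2) =
      (univ.filter fun q : Fin n × Fin n => q.1 < q.2 ∧ x q.1 = x q.2) ∪
      (univ.filter fun q : Fin n × Fin n => q.2 < q.1 ∧ x q.1 = x q.2) := by
    ext q; simp only [mem_filter, mem_univ, true_and, mem_union, ne_iff_lt_or_gt]; tauto
  have h2 : (univ.filter fun q : Fin n × Fin n => q.2 < q.1 ∧ x q.1 = x q.2).card =
      pottsH n x := by
    unfold pottsH
    refine card_bij (fun q _ => q.swap) ?_ (fun a _ b _ h => Prod.swap_injective h) ?_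
    · intro q hq
      simp only [mem_filter, mem_univ, true_and, Prod.fst_swap, Prod.snd_swap] at hq ⊢
      exact ⟨hq.1, hq.2.symm⟩
    · intro q hq
      simp only [mem_filter, mem_univ, true_and] at hq
      exact ⟨q.swap, by simpa using ⟨hq.1, hq.2.symm⟩, by simp⟩
  rw [h1, card_union_of_disjoint, h2, two_mul]
  · rfl
  · rw [disjoint_left]
    intro q hq hq'
    simp only [mem_filter, mem_univ, true_and] at hq hq'
    exact lt_asymm hq.1 hq'.1

theorem pottsH_comp (n : ℕ) (x : Fin n → Fin 3) (p : Equiv.Perm (Fin n)) :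
    pottsH n (x ∘ p) = pottsH n x := by
  have : 2 * pottsH n (x ∘ p) = 2 * pottsH n x := by
    rw [two_mul_pottsH, two_mul_pottsH]
    refine card_bij (fun q _ => (p q.1, p q.2)) (by simp) ?_ ?_
    · rintro ⟨a, b⟩ _ ⟨c, d⟩ _ h
      simpa using h
    · rintro ⟨a, b⟩ h
      exact ⟨(p.symm a, p.symm b), by simpa using h, by simp⟩
  omega

theorem pottsH_le (n : ℕ) (x : Fin n → Fin 3) : pottsH n x ≤ n * n :=
  (card_le_univ _).trans (by simp)

theorem flatWeight_update (n : ℕ) (y : Fin n → Fin 3) (v : Fin n) (c : Fin 3) :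
    flatWeight n y ≤ (n : ℝ) ^ 3 * flatWeight n (Function.update y v c) := by
  have hn : 1 ≤ n := v.pos
  have h : ∀ d, (colorCount n y d).factorial ≤
      n * (colorCount n (Function.update y v c) d).factorial := by
    intro d
    have h1 : colorCount n y d ≤ colorCount n (Function.update y v c) d + 1 := by
      unfold colorCount
      refine (card_le_card ?_).trans (card_insert_le v _)
      intro w hw
      by_cases hwv : w = v
      · simp [hwv]
      · simpa [hwv] using hw
    have h2 : colorCount n y d ≤ n := (card_le_univ _).trans (by simp)
    rcases Nat.lt_or_ge (colorCount n (Function.update y v c) d) (colorCount n y d) with h3 | h3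
    · have h4 : colorCount n y d = colorCount n (Function.update y v c) d + 1 := by omega
      rw [h4, Nat.factorial_succ]
      exact Nat.mul_le_mul_right _ (by omega)
    · exact (Nat.factorial_le h3).trans (Nat.le_mul_of_pos_left _ hn)
  have h3 : facProd n y ≤ n ^ 3 * facProd n (Function.update y v c) := by
    unfold facProd
    refine (Finset.prod_le_prod' fun d _ => h d).trans ?_
    rw [prod_mul_distrib]; simp
  unfold flatWeight
  rw [← mul_div_assoc]
  gcongr
  exact_mod_cast h3

/-! ### The entropy-dampening distributions -/

/-- The unnormalized Gibbs mass `n!/(σ₁!σ₂!σ₃!)·e^{βH}` of the whole color class of `x`. -/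
noncomputable def classMass (n : ℕ) (β : ℝ) (x : Fin n → Fin 3) : ℝ :=
  Real.exp (β * pottsH n x) / flatWeight n x

theorem classMass_pos (n : ℕ) (β : ℝ) (x : Fin n → Fin 3) : 0 < classMass n β x :=
  div_pos (Real.exp_pos _) (flatWeight_pos n x)

/-- At level `i` each color class has mass `classMass ^ (i/M)`, spread by the flat weight. -/
theorem pottsRhoUn_eq (n M : ℕ) (hM : 0 < M) (β : ℝ) (i : Fin (M + 1)) (x : Fin n → Fin 3) :
    pottsRhoUn n M β i x = flatWeight n x * classMass n β x ^ (((i : ℕ) : ℝ) / M) := by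
  have hw := flatWeight_pos n x
  have hM' : (M : ℝ) ≠ 0 := by positivity
  have h1 : (n.factorial : ℝ) /
        (((colorCount n x 0).factorial : ℝ) * ((colorCount n x 1).factorial : ℝ) *
          ((colorCount n x 2).factorial : ℝ)) = (flatWeight n x)⁻¹ := by
    simp [flatWeight, facProd, Fin.prod_univ_three]
  have h2 : (((i : ℕ) : ℝ) - M) / M = ((i : ℕ) : ℝ) / M - 1 := by field_simp
  unfold pottsRhoUn classMass
  rw [h1, h2, Real.rpow_sub (by positivity), Real.rpow_one, div_eq_mul_inv _ (flatWeight n x),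
    Real.mul_rpow (Real.exp_pos _).le (by positivity), ← Real.exp_mul, div_inv_eq_mul]
  have h3 : ((i : ℕ) : ℝ) * β / M * (pottsH n x : ℝ) = β * pottsH n x * (((i : ℕ) : ℝ) / M) := by
    ring
  rw [h3]; ring

theorem classMass_comp (n : ℕ) (β : ℝ) (x : Fin n → Fin 3) (p : Equiv.Perm (Fin n)) :
    classMass n β (x ∘ p) = classMass n β x := by
  simp only [classMass, pottsH_comp, flatWeight_comp]

/-- With `m` the largest class mass, the partition function at exponent `s` lies between `m ^ s`
and `(n+1)³ m ^ s`. -/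
theorem exists_partition_bounds (n : ℕ) (β : ℝ) :
    ∃ m : ℝ, 0 < m ∧ (∃ z, m = classMass n β z) ∧ (∀ x, classMass n β x ≤ m) ∧
      ∀ s : ℝ, 0 ≤ s →
        m ^ s ≤ ∑ x, flatWeight n x * classMass n β x ^ s ∧
        ∑ x, flatWeight n x * classMass n β x ^ s ≤ ((n : ℝ) + 1) ^ 3 * m ^ s := by
  obtain ⟨z, -, hz⟩ := exists_max_image (univ : Finset (Fin n → Fin 3)) (classMass n β)
    ⟨fun _ => 0, mem_univ _⟩
  refine ⟨classMass n β z, classMass_pos n β z, ⟨z, rfl⟩, fun x => hz x (mem_univ x), ?_⟩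
  intro s hs
  constructor
  · have h := perm_average_le n z (fun y => classMass n β y ^ s)
      fun y => Real.rpow_nonneg (classMass_pos n β y).le _
    simp only [classMass_comp, sum_const, card_univ, Fintype.card_perm, Fintype.card_fin,
      nsmul_eq_mul] at h
    exact le_of_mul_le_mul_left h (by positivity)
  · calc ∑ x, flatWeight n x * classMass n β x ^ s
        ≤ ∑ x, flatWeight n x * classMass n β z ^ s := by
          refine sum_le_sum fun x _ => ?_
          exact mul_le_mul_of_nonneg_left
            (Real.rpow_le_rpow (classMass_pos n β x).le (hz x (mem_univ x)) hs)
            (flatWeight_pos n x).le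
      _ ≤ _ := by
          rw [← sum_mul]
          exact mul_le_mul_of_nonneg_right (sum_flatWeight_le n)
            (Real.rpow_nonneg (classMass_pos n β z).le _)

section Levels
variable {n M : ℕ}

theorem pottsRhoUn_pos (β : ℝ) (hM : 0 < M) (i : Fin (M + 1)) (x : Fin n → Fin 3) :
    0 < pottsRhoUn n M β i x := by
  rw [pottsRhoUn_eq n M hM]
  exact mul_pos (flatWeight_pos n x) (Real.rpow_pos_of_pos (classMass_pos n β x) _)

theorem sum_pottsRhoUn_pos (β : ℝ) (hM : 0 < M) (i : Fin (M + 1)) :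
    0 < ∑ y : Fin n → Fin 3, pottsRhoUn n M β i y :=
  sum_pos (fun y _ => pottsRhoUn_pos β hM i y) ⟨fun _ => 0, mem_univ _⟩

theorem pottsRho_pos (β : ℝ) (hM : 0 < M) (i : Fin (M + 1)) (x : Fin n → Fin 3) :
    0 < pottsRho n M β i x :=
  div_pos (pottsRhoUn_pos β hM i x) (sum_pottsRhoUn_pos β hM i)

theorem sum_pottsRho (β : ℝ) (hM : 0 < M) (i : Fin (M + 1)) :
    ∑ x, pottsRho n M β i x = 1 := by
  simp only [pottsRho, ← sum_div]
  exact div_self (sum_pottsRhoUn_pos β hM i).ne'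

/-- Lowering the level loses at most a polynomial factor in the probability of a configuration: after
scaling so that the largest class mass is one, class masses decrease in the exponent. -/
theorem pottsRho_le_of_le (β : ℝ) (hM : 0 < M) {i j : Fin (M + 1)} (hij : j ≤ i)
    (x : Fin n → Fin 3) :
    pottsRho n M β i x ≤ ((n : ℝ) + 1) ^ 3 * pottsRho n M β j x := by
  obtain ⟨m, hm, -, hmax, hZ⟩ := exists_partition_bounds n β
  simp only [pottsRho, pottsRhoUn_eq n M hM]
  set s : ℝ := ((i : ℕ) : ℝ) / M
  set t : ℝ := ((j : ℕ) : ℝ) / M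
  have ht : 0 ≤ t := by positivity
  have hts : t ≤ s := by
    have : ((j : ℕ) : ℝ) ≤ ((i : ℕ) : ℝ) := by exact_mod_cast hij
    simp only [s, t]; gcongr
  obtain ⟨hs1, -⟩ := hZ s (ht.trans hts)
  obtain ⟨ht1, ht2⟩ := hZ t ht
  have hw := flatWeight_pos n x
  have hW := classMass_pos n β x
  have hms := Real.rpow_pos_of_pos hm s
  have hmt := Real.rpow_pos_of_pos hm t
  have hkey : (classMass n β x / m) ^ s ≤ (classMass n β x / m) ^ t :=
    Real.rpow_le_rpow_of_exponent_ge (by positivity) ((div_le_one hm).mpr (hmax x)) hts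
  rw [Real.div_rpow hW.le hm.le, Real.div_rpow hW.le hm.le] at hkey
  set Zs := ∑ x, flatWeight n x * classMass n β x ^ s
  set Zt := ∑ x, flatWeight n x * classMass n β x ^ t
  have hZs : 0 < Zs := hms.trans_le hs1
  have hZt : 0 < Zt := hmt.trans_le ht1
  have h1 : classMass n β x ^ s / Zs ≤ classMass n β x ^ s / m ^ s :=
    div_le_div_of_nonneg_left (by positivity) hms hs1
  have h2 : classMass n β x ^ t / m ^ t ≤ ((n : ℝ) + 1) ^ 3 * (classMass n β x ^ t / Zt) := by
    rw [← mul_div_assoc, div_le_div_iff₀ hmt hZt]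
    calc classMass n β x ^ t * Zt ≤ classMass n β x ^ t * (((n : ℝ) + 1) ^ 3 * m ^ t) := by
          gcongr
      _ = _ := by ring
  have h3 := mul_le_mul_of_nonneg_left (h1.trans (hkey.trans h2)) hw.le
  calc _ = flatWeight n x * (classMass n β x ^ s / Zs) := by ring
    _ ≤ _ := h3
    _ = _ := by ring

theorem pottsRho_zero (β : ℝ) (hM : 0 < M) (x : Fin n → Fin 3) :
    pottsRho n M β 0 x = flatWeight n x / ∑ y, flatWeight n y := by
  simp [pottsRho, pottsRhoUn_eq n M hM]

theorem pottsRho_lower (hn : 0 < n) {μ : ℝ} (hμ : 0 < μ) (hM : 0 < M) (i : Fin (M + 1))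
    (x : Fin n → Fin 3) :
    Real.exp (-(2 * (n : ℝ) ^ 2 + μ * n + 3 * n)) ≤ pottsRho n M (μ / n) i x := by
  obtain ⟨m, hm, ⟨z, hz⟩, hmax, hZ⟩ := exists_partition_bounds n (μ / n)
  have hn' : (0 : ℝ) < n := by exact_mod_cast hn
  have hflat : ∀ y, Real.exp (-((n : ℝ) ^ 2)) ≤ flatWeight n y := by
    intro y
    have h1 : (n.factorial : ℝ) ≤ Real.exp ((n : ℝ) ^ 2) := by
      calc (n.factorial : ℝ) ≤ (n : ℝ) ^ n := by exact_mod_cast Nat.factorial_le_pow n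
        _ ≤ Real.exp n ^ n := by
            gcongr
            have := Real.add_one_le_exp (n : ℝ); linarith
        _ = _ := by rw [← Real.exp_nat_mul]; ring_nf
    have h2 : (1 : ℝ) ≤ facProd n y := by exact_mod_cast facProd_pos n y
    rw [Real.exp_neg, ← one_div]
    unfold flatWeight
    gcongr
  have hm1 : m ≤ Real.exp ((n : ℝ) ^ 2 + μ * n) := by
    rw [hz, classMass, div_le_iff₀ (flatWeight_pos n z)]
    have h3 : μ / n * pottsH n z ≤ μ * n := by
      have : (pottsH n z : ℝ) ≤ n * n := by exact_mod_cast pottsH_le n z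
      calc μ / n * pottsH n z ≤ μ / n * (n * n) := by gcongr
        _ = _ := by field_simp
    calc Real.exp (μ / n * pottsH n z) ≤ Real.exp (μ * n) := Real.exp_le_exp.mpr h3
      _ = Real.exp ((n : ℝ) ^ 2 + μ * n) * Real.exp (-((n : ℝ) ^ 2)) := by
          rw [← Real.exp_add]; ring_nf
      _ ≤ _ := by gcongr; exact hflat z
  have hW1 : ∀ y, 1 ≤ classMass n (μ / n) y := by
    intro y
    rw [classMass, one_le_div (flatWeight_pos n y)]
    exact (flatWeight_le_one n y).trans (Real.one_le_exp (by positivity))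
  have hN : ((n : ℝ) + 1) ^ 3 ≤ Real.exp (3 * n) := by
    calc ((n : ℝ) + 1) ^ 3 ≤ Real.exp n ^ 3 := by gcongr; exact Real.add_one_le_exp _
      _ = _ := by rw [← Real.exp_nat_mul]; norm_num
  simp only [pottsRho, pottsRhoUn_eq n M hM]
  set s : ℝ := ((i : ℕ) : ℝ) / M
  have hs : 0 ≤ s := by positivity
  have hs1 : s ≤ 1 := by
    simp only [s]
    rw [div_le_one (by exact_mod_cast hM)]
    exact_mod_cast Nat.lt_succ_iff.mp i.2
  have hms : m ^ s ≤ Real.exp ((n : ℝ) ^ 2 + μ * n) := by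
    refine le_trans ?_ hm1
    calc m ^ s ≤ m ^ (1 : ℝ) := Real.rpow_le_rpow_of_exponent_le ((hW1 x).trans (hmax x)) hs1
      _ = m := Real.rpow_one m
  have hZpos := (Real.rpow_pos_of_pos hm s).trans_le (hZ s hs).1
  rw [le_div_iff₀ hZpos]
  calc Real.exp (-(2 * (n : ℝ) ^ 2 + μ * n + 3 * n)) *
        ∑ y, flatWeight n y * classMass n (μ / n) y ^ s
      ≤ Real.exp (-(2 * (n : ℝ) ^ 2 + μ * n + 3 * n)) *
        (Real.exp (3 * n) * Real.exp ((n : ℝ) ^ 2 + μ * n)) := by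
        gcongr
        refine (hZ s hs).2.trans ?_
        gcongr
    _ = Real.exp (-((n : ℝ) ^ 2)) * 1 := by
        rw [← Real.exp_add, ← Real.exp_add, mul_one]; ring_nf
    _ ≤ _ := by
        gcongr
        · exact (flatWeight_pos n x).le
        · exact hflat x
        · exact Real.one_le_rpow (hW1 x) hs

end Levels

/-! ### Canonical paths at level zero, and the transition rates -/

section FlatLevel

/-- The configuration `x` with its first `k` vertices recolored to `0`. -/
def wipe {n : ℕ} (x : Fin n → Fin 3) (k : ℕ) : Fin n → Fin 3 :=
  fun v => if (v : ℕ) < k then 0 else x v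

/-- Cauchy–Schwarz along the path that recolors the vertices to `0` one at a time, started at a
rearrangement `x ∘ p` and following the rearranged order. -/
theorem wipe_path_bound {n : ℕ} (f : (Fin n → Fin 3) → ℝ) (x : Fin n → Fin 3)
    (p : Equiv.Perm (Fin n)) :
    (f (x ∘ p) - f (fun _ => 0)) ^ 2 ≤ n * ∑ k ∈ range n,
      ∑ v, (f (wipe x k ∘ p) - f (Function.update (wipe x k ∘ p) v 0)) ^ 2 := by
  have h0 : x = wipe x 0 := by funext v; simp [wipe]
  have hn : (fun _ => 0) = wipe x n ∘ p := by funext v; simp [wipe]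
  have htel : f (x ∘ p) - f (fun _ => 0) =
      ∑ k ∈ range n, (f (wipe x k ∘ p) - f (wipe x (k + 1) ∘ p)) := by
    rw [Finset.sum_range_sub' (fun k => f (wipe x k ∘ p)), ← h0, ← hn]
  rw [htel]
  refine sq_sum_le_card_mul_sum_sq.trans ?_
  rw [card_range]
  refine mul_le_mul_of_nonneg_left (sum_le_sum fun k hk => ?_) (Nat.cast_nonneg n)
  have hk' : k < n := mem_range.mp hk
  have hstep : wipe x (k + 1) ∘ p = Function.update (wipe x k ∘ p) (p.symm ⟨k, hk'⟩) 0 := by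
    funext v
    by_cases hv : v = p.symm ⟨k, hk'⟩
    · subst hv; simp [wipe]
    · have h1 : p v ≠ ⟨k, hk'⟩ := fun h => hv (by rw [← h]; simp)
      have h2 : ((p v : Fin n) : ℕ) ≠ k := fun h => h1 (Fin.ext h)
      have h3 : ((p v : Fin n) : ℕ) < k + 1 ↔ ((p v : Fin n) : ℕ) < k := by omega
      simp [wipe, hv, h3]
  rw [hstep]
  exact single_le_sum
    (f := fun v => (f (wipe x k ∘ p) - f (Function.update (wipe x k ∘ p) v 0)) ^ 2)
    (fun v _ => sq_nonneg _) (mem_univ _)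

/-- Poincaré-type inequality at level `0`, with the all-`0` configuration as reference point. -/
theorem flat_level_poincare {n : ℕ} (f : (Fin n → Fin 3) → ℝ) :
    ∑ x, flatWeight n x * (f x - f (fun _ => 0)) ^ 2 ≤
      (∑ x, flatWeight n x) * ((n : ℝ) ^ 2 *
        ∑ y, flatWeight n y * ∑ v, (f y - f (Function.update y v 0)) ^ 2) := by
  set F : (Fin n → Fin 3) → ℝ := fun y => ∑ v, (f y - f (Function.update y v 0)) ^ 2 with hF
  have hF0 : ∀ y, 0 ≤ F y := fun y => sum_nonneg fun _ _ => sq_nonneg _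
  set B := ∑ y, flatWeight n y * F y
  have hfac : (0 : ℝ) < n.factorial := by positivity
  have hinv : ∀ p : Equiv.Perm (Fin n), ∑ x, flatWeight n x * (f x - f (fun _ => 0)) ^ 2 =
      ∑ x, flatWeight n x * (f (x ∘ p) - f (fun _ => 0)) ^ 2 := by
    intro p
    rw [← Equiv.sum_comp (Equiv.arrowCongr p.symm (Equiv.refl (Fin 3)))]
    refine sum_congr rfl fun x _ => ?_
    have : (Equiv.arrowCongr p.symm (Equiv.refl (Fin 3))) x = x ∘ p := by
      funext v; simp [Equiv.arrowCongr]
    rw [this, flatWeight_comp]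
  have hx : ∀ x : Fin n → Fin 3, ∑ p : Equiv.Perm (Fin n), (f (x ∘ p) - f (fun _ => 0)) ^ 2 ≤
      n.factorial * ((n : ℝ) ^ 2 * B) := by
    intro x
    calc ∑ p : Equiv.Perm (Fin n), (f (x ∘ p) - f (fun _ => 0)) ^ 2
        ≤ ∑ p : Equiv.Perm (Fin n), n * ∑ k ∈ range n, F (wipe x k ∘ p) :=
          sum_le_sum fun p _ => wipe_path_bound f x p
      _ = n * ∑ k ∈ range n, ∑ p : Equiv.Perm (Fin n), F (wipe x k ∘ p) := by
          rw [← mul_sum, sum_comm]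
      _ ≤ n * ∑ k ∈ range n, n.factorial * B := by
          gcongr with k _
          exact perm_average_le n (wipe x k) F hF0
      _ = _ := by simp; ring
  have hmain : (n.factorial : ℝ) * ∑ x, flatWeight n x * (f x - f (fun _ => 0)) ^ 2 ≤
      n.factorial * ((∑ x, flatWeight n x) * ((n : ℝ) ^ 2 * B)) := by
    calc (n.factorial : ℝ) * ∑ x, flatWeight n x * (f x - f (fun _ => 0)) ^ 2
        = ∑ p : Equiv.Perm (Fin n), ∑ x, flatWeight n x * (f (x ∘ p) - f (fun _ => 0)) ^ 2 := by
          rw [sum_congr rfl fun p _ => (hinv p).symm]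
          simp [Fintype.card_perm]
      _ = ∑ x, flatWeight n x * ∑ p : Equiv.Perm (Fin n), (f (x ∘ p) - f (fun _ => 0)) ^ 2 := by
          rw [sum_comm]; simp only [mul_sum]
      _ ≤ ∑ x, flatWeight n x * (n.factorial * ((n : ℝ) ^ 2 * B)) :=
          sum_le_sum fun x _ => mul_le_mul_of_nonneg_left (hx x) (flatWeight_pos n x).le
      _ = _ := by rw [← sum_mul]; ring
  exact le_of_mul_le_mul_left hmain hfac

end FlatLevel

section Chain

theorem sum_pottsProp_mul (n : ℕ) (x : Fin n → Fin 3) (G : (Fin n → Fin 3) → ℝ) :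
    ∑ y, pottsProp n x y * G y =
      (∑ vc : Fin n × Fin 3, G (Function.update x vc.1 vc.2)) / (n * 3) := by
  rw [← Finset.sum_fiberwise univ (fun vc : Fin n × Fin 3 => Function.update x vc.1 vc.2), sum_div]
  refine sum_congr rfl fun y _ => ?_
  have h1 : ∑ vc ∈ univ.filter (fun vc : Fin n × Fin 3 => Function.update x vc.1 vc.2 = y),
      G (Function.update x vc.1 vc.2) =
      ((univ.filter (fun vc : Fin n × Fin 3 => Function.update x vc.1 vc.2 = y)).card : ℝ) * G y := by
    rw [← nsmul_eq_mul, ← sum_const]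
    exact sum_congr rfl fun vc hvc => by rw [(mem_filter.mp hvc).2]
  rw [h1, pottsProp]; ring

theorem pottsProp_nonneg (n : ℕ) (x y : Fin n → Fin 3) : 0 ≤ pottsProp n x y := by
  unfold pottsProp; positivity

theorem sum_pottsProp {n : ℕ} (hn : 0 < n) (x : Fin n → Fin 3) : ∑ y, pottsProp n x y = 1 := by
  have h := sum_pottsProp_mul n x (fun _ => 1)
  simp only [mul_one] at h
  rw [h]
  simp only [sum_const, card_univ, Fintype.card_prod, Fintype.card_fin, nsmul_eq_mul, mul_one]
  push_cast
  exact div_self (by positivity)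

theorem pottsProp_self {n : ℕ} (hn : 0 < n) (x : Fin n → Fin 3) : pottsProp n x x = 1 / 3 := by
  have h : (univ.filter (fun vc : Fin n × Fin 3 => Function.update x vc.1 vc.2 = x)) =
      univ.image fun v : Fin n => (v, x v) := by
    ext ⟨v, c⟩
    simp only [mem_filter, mem_univ, true_and, Function.update_eq_self_iff, mem_image,
      Prod.mk.injEq, exists_eq_left]
    exact eq_comm
  have hinj : Function.Injective fun v : Fin n => (v, x v) := fun a b h => (Prod.mk.inj h).1
  unfold pottsProp
  rw [h, card_image_of_injective _ hinj]
  have : (n : ℝ) ≠ 0 := by positivity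
  simp
  field_simp

theorem pottsProp_symm (n : ℕ) (x y : Fin n → Fin 3) : pottsProp n x y = pottsProp n y x := by
  have h : ∀ x y : Fin n → Fin 3,
      (univ.filter (fun vc : Fin n × Fin 3 => Function.update x vc.1 vc.2 = y)).card ≤
      (univ.filter (fun vc : Fin n × Fin 3 => Function.update y vc.1 vc.2 = x)).card := by
    intro x y
    refine card_le_card_of_injOn (fun vc => (vc.1, x vc.1)) ?_ ?_
    · rintro ⟨v, c⟩ h
      simp only [coe_filter, mem_univ, true_and, Set.mem_ofPred_eq] at h ⊢
      rw [← h]; simp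
    · rintro ⟨v, c⟩ h ⟨w, d⟩ h' hvw
      simp only [coe_filter, mem_univ, true_and, Set.mem_ofPred_eq] at h h'
      simp only [Prod.mk.injEq] at hvw
      obtain ⟨rfl, -⟩ := hvw
      have := congrFun (h.trans h'.symm) v
      simpa using this
  unfold pottsProp
  rw [le_antisymm (h x y) (h y x)]

variable {n M : ℕ}

/-- The Flat-tempering chain at inverse temperature `β`. -/
noncomputable def flatChain (n M : ℕ) (β : ℝ) :
    Matrix ((Fin n → Fin 3) × Fin (M + 1)) ((Fin n → Fin 3) × Fin (M + 1)) ℝ :=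
  temperingChain (fun i : Fin (M + 1) => metropolis (pottsProp n) (pottsRho n M β i))
    (pottsRho n M β)

/-- The stationary distribution of the Flat-tempering chain. -/
noncomputable def flatStat (n M : ℕ) (β : ℝ) (p : (Fin n → Fin 3) × Fin (M + 1)) : ℝ :=
  pottsRho n M β p.2 p.1 / (M + 1)

/-- Rate of accepted proposals from `p` to `q`. It agrees with `flatChain` off the diagonal; on
the diagonal it counts only the level proposals which do not change the color. -/
noncomputable def flatRate (n M : ℕ) (β : ℝ) (p q : (Fin n → Fin 3) × Fin (M + 1)) : ℝ :=
  (if q.2 = p.2 then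
    (1 / 2) * (pottsProp n p.1 q.1 * min 1 (pottsRho n M β p.2 q.1 / pottsRho n M β p.2 p.1))
    else 0) +
  (if q.1 = p.1 ∧ ((q.2 : ℕ) = (p.2 : ℕ) + 1 ∨ (q.2 : ℕ) + 1 = (p.2 : ℕ)) then
    (1 / 4) * min 1 (pottsRho n M β q.2 p.1 / pottsRho n M β p.2 p.1) else 0)

theorem temperingOff_eq_flatRate (β : ℝ) {p q : (Fin n → Fin 3) × Fin (M + 1)} (h : q ≠ p) :
    temperingOff (fun i : Fin (M + 1) => metropolis (pottsProp n) (pottsRho n M β i))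
      (pottsRho n M β) p q = flatRate n M β p q := by
  unfold temperingOff flatRate
  congr 1
  by_cases h2 : q.2 = p.2
  · have h1 : q.1 ≠ p.1 := fun h1 => h (Prod.ext h1 h2)
    simp [h2, metropolis, h1]
  · simp [h2]

theorem flatChain_off (β : ℝ) {p q : (Fin n → Fin 3) × Fin (M + 1)} (h : q ≠ p) :
    flatChain n M β p q = flatRate n M β p q := by
  rw [← temperingOff_eq_flatRate β h]
  simp [flatChain, temperingChain, h]

theorem flatChain_diag (β : ℝ) (p : (Fin n → Fin 3) × Fin (M + 1)) :
    flatChain n M β p p = 1 - ∑ r ∈ univ.erase p, flatRate n M β p r := by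
  simp only [flatChain, temperingChain, Matrix.of_apply, if_true]
  congr 1
  exact sum_congr rfl fun r hr => temperingOff_eq_flatRate β (ne_of_mem_erase hr)

theorem flatRate_nonneg (β : ℝ) (hM : 0 < M) (p q : (Fin n → Fin 3) × Fin (M + 1)) :
    0 ≤ flatRate n M β p q := by
  have h := fun i x => pottsRho_pos (n := n) β hM i x
  have h1 : ∀ i j x y, 0 ≤ min 1 (pottsRho n M β i x / pottsRho n M β j y) := fun i j x y =>
    le_min zero_le_one (div_pos (h i x) (h j y)).le
  unfold flatRate
  refine add_nonneg ?_ ?_ <;> split_ifs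
  · have := pottsProp_nonneg n p.1 q.1
    have := h1 p.2 p.2 q.1 p.1
    positivity
  · exact le_rfl
  · have := h1 q.2 p.2 p.1 p.1
    positivity
  · exact le_rfl

theorem sum_flatRate_le (β : ℝ) (hn : 0 < n) (p : (Fin n → Fin 3) × Fin (M + 1)) :
    ∑ q, flatRate n M β p q ≤ 1 := by
  obtain ⟨x, i⟩ := p
  simp only [flatRate, sum_add_distrib, Fintype.sum_prod_type]
  have h1 : ∑ y, ∑ j : Fin (M + 1), (if j = i then (1 / 2) * (pottsProp n x y *
      min 1 (pottsRho n M β i y / pottsRho n M β i x)) else 0) ≤ 1 / 2 := by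
    calc _ ≤ ∑ y, (1 / 2) * pottsProp n x y := by
          refine sum_le_sum fun y _ => ?_
          rw [sum_ite_eq' univ i, if_pos (mem_univ _)]
          have := mul_le_mul_of_nonneg_left (min_le_left 1
            (pottsRho n M β i y / pottsRho n M β i x)) (pottsProp_nonneg n x y)
          linarith
      _ = 1 / 2 := by rw [← mul_sum, sum_pottsProp hn, mul_one]
  have h2 : ∑ y : Fin n → Fin 3, ∑ j : Fin (M + 1),
      (if y = x ∧ ((j : ℕ) = (i : ℕ) + 1 ∨ (j : ℕ) + 1 = (i : ℕ)) then
      (1 / 4) * min 1 (pottsRho n M β j x / pottsRho n M β i x) else 0) ≤ 1 / 2 := by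
    have hcard : (univ.filter fun j : Fin (M + 1) =>
        (j : ℕ) = (i : ℕ) + 1 ∨ (j : ℕ) + 1 = (i : ℕ)).card ≤ 2 := by
      rw [filter_or]
      refine (card_union_le _ _).trans (add_le_add (b := 1) (d := 1) ?_ ?_) <;>
      · rw [card_le_one]
        intro a ha b hb
        simp only [mem_filter, mem_univ, true_and] at ha hb
        exact Fin.ext (by omega)
    calc _ = ∑ j : Fin (M + 1), (if ((j : ℕ) = (i : ℕ) + 1 ∨ (j : ℕ) + 1 = (i : ℕ)) then
          (1 / 4) * min 1 (pottsRho n M β j x / pottsRho n M β i x) else 0) := by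
          rw [sum_eq_single x]
          · simp
          · intro y _ hy; simp [hy]
          · simp
      _ ≤ ∑ j : Fin (M + 1), (if ((j : ℕ) = (i : ℕ) + 1 ∨ (j : ℕ) + 1 = (i : ℕ)) then
          (1 / 4 : ℝ) else 0) := by
          refine sum_le_sum fun j _ => ?_
          split_ifs
          · linarith [min_le_left 1 (pottsRho n M β j x / pottsRho n M β i x)]
          · exact le_rfl
      _ = ((univ.filter fun j : Fin (M + 1) =>
        (j : ℕ) = (i : ℕ) + 1 ∨ (j : ℕ) + 1 = (i : ℕ)).card : ℝ) * (1 / 4) := by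
          rw [← sum_filter, sum_const, nsmul_eq_mul]
      _ ≤ 2 * (1 / 4) := by gcongr; exact_mod_cast hcard
      _ = 1 / 2 := by norm_num
  linarith

theorem flatChain_lazy (β : ℝ) (hn : 0 < n) (hM : 0 < M) (p : (Fin n → Fin 3) × Fin (M + 1)) :
    1 / 6 ≤ flatChain n M β p p := by
  rw [flatChain_diag]
  have h1 := sum_flatRate_le (M := M) β hn p
  rw [← add_sum_erase univ _ (mem_univ p)] at h1
  have h2 : flatRate n M β p p = 1 / 6 := by
    have := (pottsRho_pos β hM p.2 p.1).ne'
    simp [flatRate, pottsProp_self hn, div_self this]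
    norm_num
  linarith

theorem flatChain_nonneg (β : ℝ) (hn : 0 < n) (hM : 0 < M)
    (p q : (Fin n → Fin 3) × Fin (M + 1)) : 0 ≤ flatChain n M β p q := by
  by_cases h : q = p
  · subst h; linarith [flatChain_lazy β hn hM q]
  · rw [flatChain_off β h]; exact flatRate_nonneg β hM p q

theorem flatChain_row (β : ℝ) (p : (Fin n → Fin 3) × Fin (M + 1)) :
    ∑ q, flatChain n M β p q = 1 := by
  rw [← add_sum_erase univ _ (mem_univ p), flatChain_diag,
    sum_congr rfl fun q hq => flatChain_off β (ne_of_mem_erase hq)]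
  ring

/-- The ergodic flow `π(p)·rate(p,q)` in manifestly symmetric form. -/
theorem flatFlow_eq (β : ℝ) (hM : 0 < M) (p q : (Fin n → Fin 3) × Fin (M + 1)) :
    flatStat n M β p * flatRate n M β p q =
      (if q.2 = p.2 then pottsProp n p.1 q.1 *
        min (pottsRho n M β p.2 p.1) (pottsRho n M β q.2 q.1) / (2 * (M + 1)) else 0) +
      (if q.1 = p.1 ∧ ((q.2 : ℕ) = (p.2 : ℕ) + 1 ∨ (q.2 : ℕ) + 1 = (p.2 : ℕ)) then
        min (pottsRho n M β p.2 p.1) (pottsRho n M β q.2 q.1) / (4 * (M + 1)) else 0) := by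
  have hp := pottsRho_pos β hM p.2 p.1
  have hM1 : (M : ℝ) + 1 ≠ 0 := by positivity
  have hmin : ∀ b : ℝ, min (pottsRho n M β p.2 p.1) b =
      pottsRho n M β p.2 p.1 * min 1 (b / pottsRho n M β p.2 p.1) := by
    intro b
    rw [mul_min_of_nonneg _ _ hp.le, mul_one, mul_div_cancel₀ _ hp.ne']
  unfold flatStat flatRate
  rw [mul_add]
  congr 1
  · split_ifs with h
    · rw [h, hmin]; field_simp
    · simp
  · split_ifs with h
    · rw [h.1, hmin]; field_simp
    · simp

theorem flatChain_rev (β : ℝ) (hM : 0 < M) (p q : (Fin n → Fin 3) × Fin (M + 1)) :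
    flatStat n M β p * flatChain n M β p q = flatStat n M β q * flatChain n M β q p := by
  by_cases h : q = p
  · rw [h]
  · rw [flatChain_off β h, flatChain_off β (Ne.symm h), flatFlow_eq β hM, flatFlow_eq β hM,
      pottsProp_symm n p.1 q.1, min_comm (pottsRho n M β p.2 p.1)]
    have h1 : (q.2 = p.2) = (p.2 = q.2) := propext eq_comm
    have h2 : (q.1 = p.1 ∧ ((q.2 : ℕ) = (p.2 : ℕ) + 1 ∨ (q.2 : ℕ) + 1 = (p.2 : ℕ))) =
        (p.1 = q.1 ∧ ((p.2 : ℕ) = (q.2 : ℕ) + 1 ∨ (p.2 : ℕ) + 1 = (q.2 : ℕ))) := by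
      apply propext
      constructor <;> rintro ⟨h, h'⟩ <;> exact ⟨h.symm, by omega⟩
    simp only [h1, h2]

theorem flatStat_pos (β : ℝ) (hM : 0 < M) (p : (Fin n → Fin 3) × Fin (M + 1)) :
    0 < flatStat n M β p := div_pos (pottsRho_pos β hM _ _) (by positivity)

theorem sum_flatStat (β : ℝ) (hM : 0 < M) : ∑ p, flatStat n M β p = 1 := by
  simp only [flatStat, ← sum_div, Fintype.sum_prod_type]
  rw [sum_comm]
  simp only [sum_pottsRho β hM]
  have : (M : ℝ) + 1 ≠ 0 := by positivity
  simp [this]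

end Chain

/-! ### The Poincaré inequality of the Flat-tempering chain -/

section Poincare
variable {n M : ℕ}

/-- The Dirichlet form of the Flat-tempering chain (without the customary factor `1/2`). -/
noncomputable def flatDirichlet (n M : ℕ) (β : ℝ) (f : (Fin n → Fin 3) × Fin (M + 1) → ℝ) : ℝ :=
  ∑ p, ∑ q, flatStat n M β p * flatChain n M β p q * (f p - f q) ^ 2

/-- The Dirichlet form dominates its part between any two given levels. -/
theorem level_pair_le_flatDirichlet (β : ℝ) (hM : 0 < M)
    (f : (Fin n → Fin 3) × Fin (M + 1) → ℝ) (i j : Fin (M + 1)) :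
    ∑ x, ∑ y, flatStat n M β (x, i) * flatRate n M β (x, i) (y, j) * (f (x, i) - f (y, j)) ^ 2 ≤
      flatDirichlet n M β f := by
  have hD : flatDirichlet n M β f =
      ∑ p, ∑ q, flatStat n M β p * flatRate n M β p q * (f p - f q) ^ 2 := by
    refine sum_congr rfl fun p _ => sum_congr rfl fun q _ => ?_
    by_cases h : q = p
    · simp [h]
    · rw [flatChain_off β h]
  have h0 : ∀ p q, 0 ≤ flatStat n M β p * flatRate n M β p q * (f p - f q) ^ 2 := fun p q =>
    mul_nonneg (mul_nonneg (flatStat_pos β hM p).le (flatRate_nonneg β hM p q)) (sq_nonneg _)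
  rw [hD]
  simp only [Fintype.sum_prod_type]
  refine sum_le_sum fun x _ => ?_
  refine le_trans ?_ (single_le_sum (f := fun i => ∑ y, ∑ j, flatStat n M β (x, i) *
    flatRate n M β (x, i) (y, j) * (f (x, i) - f (y, j)) ^ 2)
    (fun i _ => sum_nonneg fun y _ => sum_nonneg fun j _ => h0 _ _) (mem_univ i))
  refine sum_le_sum fun y _ => ?_
  exact single_le_sum (f := fun j => flatStat n M β (x, i) *
    flatRate n M β (x, i) (y, j) * (f (x, i) - f (y, j)) ^ 2) (fun j _ => h0 _ _) (mem_univ j)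

theorem adjacent_levels_bound (β : ℝ) (hM : 0 < M)
    (f : (Fin n → Fin 3) × Fin (M + 1) → ℝ) (i j : Fin (M + 1)) (hij : (j : ℕ) = i + 1) :
    ∑ x, min (pottsRho n M β i x) (pottsRho n M β j x) * (f (x, i) - f (x, j)) ^ 2 ≤
      4 * (M + 1) * flatDirichlet n M β f := by
  have h := level_pair_le_flatDirichlet β hM f i j
  have hne : j ≠ i := fun h => by rw [h] at hij; omega
  simp only [flatFlow_eq β hM, hne, if_false, zero_add, hij, true_or, and_true] at h
  have h1 : ∀ x : Fin n → Fin 3, ∑ y : Fin n → Fin 3,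
      (if y = x then min (pottsRho n M β i x) (pottsRho n M β j y) / (4 * ((M : ℝ) + 1)) else 0) *
        (f (x, i) - f (y, j)) ^ 2 =
      (min (pottsRho n M β i x) (pottsRho n M β j x) * (f (x, i) - f (x, j)) ^ 2) /
        (4 * ((M : ℝ) + 1)) := by
    intro x
    rw [sum_eq_single x]
    · simp; ring
    · intro y _ hy; simp [hy]
    · simp
  simp only [h1, ← sum_div] at h
  rw [div_le_iff₀ (by positivity)] at h
  linarith

/-- Single-vertex recolorings at level `0` are accepted with probability at least `n⁻³`. -/
theorem flat_level_bound (β : ℝ) (hn : 0 < n) (hM : 0 < M)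
    (f : (Fin n → Fin 3) × Fin (M + 1) → ℝ) :
    ∑ x, pottsRho n M β 0 x * ∑ v, (f (x, 0) - f (Function.update x v 0, 0)) ^ 2 ≤
      6 * (n : ℝ) ^ 4 * (M + 1) * flatDirichlet n M β f := by
  have h := level_pair_le_flatDirichlet β hM f 0 0
  have hadj : ∀ P : Prop, (P ∧ (((0 : Fin (M + 1)) : ℕ) = ((0 : Fin (M + 1)) : ℕ) + 1 ∨
    ((0 : Fin (M + 1)) : ℕ) + 1 = ((0 : Fin (M + 1)) : ℕ))) = False := by simp
  simp only [flatFlow_eq β hM, if_true, hadj, if_false, add_zero] at h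
  have hn' : (0 : ℝ) < n := by exact_mod_cast hn
  have hρ : ∀ x v, pottsRho n M β 0 x ≤
      (n : ℝ) ^ 3 * min (pottsRho n M β 0 x) (pottsRho n M β 0 (Function.update x v 0)) := by
    intro x v
    have hpos := pottsRho_pos (n := n) β hM 0 x
    rw [mul_min_of_nonneg _ _ (by positivity)]
    refine le_min ?_ ?_
    · have : (1 : ℝ) ≤ (n : ℝ) ^ 3 := one_le_pow₀ (by exact_mod_cast hn)
      nlinarith
    · rw [pottsRho_zero β hM, pottsRho_zero β hM, ← mul_div_assoc]
      exact div_le_div_of_nonneg_right (flatWeight_update n x v 0)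
        (sum_nonneg fun y _ => (flatWeight_pos n y).le)
  have h1 : ∀ x : Fin n → Fin 3,
      pottsRho n M β 0 x * ∑ v, (f (x, 0) - f (Function.update x v 0, 0)) ^ 2 ≤
      6 * (n : ℝ) ^ 4 * (M + 1) * ∑ y, pottsProp n x y *
        min (pottsRho n M β 0 x) (pottsRho n M β 0 y) / (2 * (M + 1)) *
          (f (x, 0) - f (y, 0)) ^ 2 := by
    intro x
    set G : (Fin n → Fin 3) → ℝ := fun y => min (pottsRho n M β 0 x) (pottsRho n M β 0 y) *
      (f (x, 0) - f (y, 0)) ^ 2 with hG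
    have hG0 : ∀ y, 0 ≤ G y := fun y => mul_nonneg
      (le_min (pottsRho_pos β hM 0 x).le (pottsRho_pos β hM 0 y).le) (sq_nonneg _)
    have h2 : ∑ y, pottsProp n x y * min (pottsRho n M β 0 x) (pottsRho n M β 0 y) /
        (2 * ((M : ℝ) + 1)) * (f (x, 0) - f (y, 0)) ^ 2 =
        (∑ vc : Fin n × Fin 3, G (Function.update x vc.1 vc.2)) / (n * 3) / (2 * ((M : ℝ) + 1)) := by
      rw [← sum_pottsProp_mul, sum_div]
      exact sum_congr rfl fun y _ => by simp only [hG]; ring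
    have h3 : ∑ v, G (Function.update x v 0) ≤
        ∑ vc : Fin n × Fin 3, G (Function.update x vc.1 vc.2) := by
      rw [Fintype.sum_prod_type]
      exact sum_le_sum fun v _ => single_le_sum (f := fun c => G (Function.update x v c))
        (fun c _ => hG0 _) (mem_univ 0)
    rw [h2]
    calc pottsRho n M β 0 x * ∑ v, (f (x, 0) - f (Function.update x v 0, 0)) ^ 2
        ≤ ∑ v, (n : ℝ) ^ 3 * G (Function.update x v 0) := by
          rw [mul_sum]
          refine sum_le_sum fun v _ => ?_
          rw [hG, ← mul_assoc]
          exact mul_le_mul_of_nonneg_right (hρ x v) (sq_nonneg _)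
      _ ≤ (n : ℝ) ^ 3 * ∑ vc : Fin n × Fin 3, G (Function.update x vc.1 vc.2) := by
          rw [← mul_sum]; gcongr
      _ = _ := by field_simp; ring
  calc _ ≤ ∑ x, 6 * (n : ℝ) ^ 4 * (M + 1) * ∑ y, pottsProp n x y *
        min (pottsRho n M β 0 x) (pottsRho n M β 0 y) / (2 * (M + 1)) *
          (f (x, 0) - f (y, 0)) ^ 2 := sum_le_sum fun x _ => h1 x
    _ ≤ _ := by
        rw [← mul_sum]
        exact mul_le_mul_of_nonneg_left h (by positivity)

/-- Lowering the level from `i` to `0` at a fixed configuration. -/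
theorem descent_bound (β : ℝ) (hM : 0 < M)
    (f : (Fin n → Fin 3) × Fin (M + 1) → ℝ) (i : Fin (M + 1)) :
    ∑ x, pottsRho n M β i x * (f (x, i) - f (x, 0)) ^ 2 ≤
      4 * ((n : ℝ) + 1) ^ 3 * (M : ℝ) ^ 2 * (M + 1) * flatDirichlet n M β f := by
  let lv : ℕ → Fin (M + 1) := fun j => ⟨min j M, by omega⟩
  have hlv0 : lv 0 = 0 := Fin.ext (by simp [lv])
  have hlvi : lv i = i := Fin.ext (by simp only [lv]; omega)
  have hiM : (i : ℕ) ≤ M := Nat.lt_succ_iff.mp i.2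
  set E := flatDirichlet n M β f with hE
  have hstep : ∀ j ∈ range (i : ℕ),
      ∑ x, pottsRho n M β i x * (f (x, lv j) - f (x, lv (j + 1))) ^ 2 ≤
        ((n : ℝ) + 1) ^ 3 * (4 * (M + 1) * E) := by
    intro j hj
    have hj' : j < i := mem_range.mp hj
    have hadj : ((lv (j + 1) : Fin (M + 1)) : ℕ) = (lv j : ℕ) + 1 := by simp only [lv]; omega
    have h1 : lv j ≤ i := by rw [Fin.le_def]; simp only [lv]; omega
    have h2 : lv (j + 1) ≤ i := by rw [Fin.le_def]; simp only [lv]; omega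
    refine le_trans ?_ (mul_le_mul_of_nonneg_left
      (adjacent_levels_bound β hM f (lv j) (lv (j + 1)) hadj) (by positivity))
    rw [mul_sum]
    refine sum_le_sum fun x _ => ?_
    rw [← mul_assoc]
    refine mul_le_mul_of_nonneg_right ?_ (sq_nonneg _)
    rw [mul_min_of_nonneg _ _ (by positivity)]
    exact le_min (pottsRho_le_of_le β hM h1 x) (pottsRho_le_of_le β hM h2 x)
  have hE0 : 0 ≤ E := sum_nonneg fun p _ => sum_nonneg fun q _ => by
    by_cases h : q = p
    · simp [h]
    · rw [flatChain_off β h]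
      exact mul_nonneg (mul_nonneg (flatStat_pos β hM p).le (flatRate_nonneg β hM p q))
        (sq_nonneg _)
  have hiM' : ((i : ℕ) : ℝ) ≤ M := by exact_mod_cast hiM
  calc ∑ x, pottsRho n M β i x * (f (x, i) - f (x, 0)) ^ 2
      ≤ ∑ x, pottsRho n M β i x * (((i : ℕ) : ℝ) *
          ∑ j ∈ range (i : ℕ), (f (x, lv j) - f (x, lv (j + 1))) ^ 2) := by
        refine sum_le_sum fun x _ => mul_le_mul_of_nonneg_left ?_ (pottsRho_pos β hM i x).le
        have htel : f (x, i) - f (x, 0) =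
            -∑ j ∈ range (i : ℕ), (f (x, lv j) - f (x, lv (j + 1))) := by
          rw [Finset.sum_range_sub' (fun j => f (x, lv j)), hlv0, hlvi]; ring
        rw [htel, neg_sq]
        refine sq_sum_le_card_mul_sum_sq.trans ?_
        rw [card_range]
    _ = ((i : ℕ) : ℝ) * ∑ j ∈ range (i : ℕ),
          ∑ x, pottsRho n M β i x * (f (x, lv j) - f (x, lv (j + 1))) ^ 2 := by
        rw [sum_comm, mul_sum]
        refine sum_congr rfl fun x _ => ?_
        rw [← mul_sum]; ring
    _ ≤ ((i : ℕ) : ℝ) * ∑ j ∈ range (i : ℕ), ((n : ℝ) + 1) ^ 3 * (4 * (M + 1) * E) := by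
        gcongr with j hj
        exact hstep j hj
    _ = ((i : ℕ) : ℝ) ^ 2 * (((n : ℝ) + 1) ^ 3 * (4 * (M + 1) * E)) := by
        rw [sum_const, card_range, nsmul_eq_mul]; ring
    _ ≤ (M : ℝ) ^ 2 * (((n : ℝ) + 1) ^ 3 * (4 * (M + 1) * E)) := by gcongr
    _ = _ := by ring

theorem flatChain_poincare (β : ℝ) (hn : 0 < n) (hM : 0 < M)
    (f : (Fin n → Fin 3) × Fin (M + 1) → ℝ) :
    ∑ p, flatStat n M β p * (f p - f (fun _ => 0, 0)) ^ 2 ≤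
      (12 * (((n : ℝ) + 1) ^ 3) ^ 2 * (n : ℝ) ^ 6 * (M + 1) +
        8 * ((n : ℝ) + 1) ^ 3 * (M : ℝ) ^ 2 * (M + 1)) * flatDirichlet n M β f := by
  set E := flatDirichlet n M β f
  set N : ℝ := ((n : ℝ) + 1) ^ 3 with hN
  have hM1 : (0 : ℝ) < (M : ℝ) + 1 := by positivity
  have hZ : 0 < ∑ y, flatWeight n y :=
    sum_pos (fun y _ => flatWeight_pos n y) ⟨fun _ => 0, mem_univ _⟩
  have hzero : ∑ x, pottsRho n M β 0 x * (f (x, 0) - f (fun _ => 0, 0)) ^ 2 ≤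
      N * ((n : ℝ) ^ 2 * (6 * (n : ℝ) ^ 4 * (M + 1) * E)) := by
    have h1 := flat_level_poincare (fun x => f (x, 0))
    have h2 := flat_level_bound β hn hM f
    have h3 : ∀ g : (Fin n → Fin 3) → ℝ, ∑ x, pottsRho n M β 0 x * g x =
        (∑ x, flatWeight n x * g x) / ∑ y, flatWeight n y := by
      intro g
      rw [sum_div]
      exact sum_congr rfl fun x _ => by rw [pottsRho_zero β hM]; ring
    have h4 : ∑ x, pottsRho n M β 0 x * (f (x, 0) - f (fun _ => 0, 0)) ^ 2 ≤
        (∑ y, flatWeight n y) * ((n : ℝ) ^ 2 * ∑ x, pottsRho n M β 0 x *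
          ∑ v, (f (x, 0) - f (Function.update x v 0, 0)) ^ 2) := by
      rw [h3, h3, div_le_iff₀ hZ]
      refine h1.trans (le_of_eq ?_)
      field_simp
    refine h4.trans ?_
    have h5 : 0 ≤ ∑ x, pottsRho n M β 0 x *
          ∑ v, (f (x, 0) - f (Function.update x v 0, 0)) ^ 2 :=
      sum_nonneg fun x _ => mul_nonneg (pottsRho_pos β hM 0 x).le
        (sum_nonneg fun _ _ => sq_nonneg _)
    have h6 := sum_flatWeight_le n
    gcongr
  have hlevel : ∀ i : Fin (M + 1),
      ∑ x, pottsRho n M β i x * (f (x, i) - f (fun _ => 0, 0)) ^ 2 ≤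
      (12 * N ^ 2 * (n : ℝ) ^ 6 * (M + 1) + 8 * N * (M : ℝ) ^ 2 * (M + 1)) * E := by
    intro i
    have hd := descent_bound β hM f i
    calc ∑ x, pottsRho n M β i x * (f (x, i) - f (fun _ => 0, 0)) ^ 2
        ≤ ∑ x, (2 * N * (pottsRho n M β 0 x * (f (x, 0) - f (fun _ => 0, 0)) ^ 2) +
            2 * (pottsRho n M β i x * (f (x, i) - f (x, 0)) ^ 2)) := by
          refine sum_le_sum fun x _ => ?_
          have h1 := pottsRho_le_of_le β hM (Fin.zero_le i) x
          have h2 : (f (x, i) - f (fun _ => 0, 0)) ^ 2 ≤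
              2 * (f (x, 0) - f (fun _ => 0, 0)) ^ 2 + 2 * (f (x, i) - f (x, 0)) ^ 2 := by
            nlinarith [sq_nonneg ((f (x, i) - f (x, 0)) - (f (x, 0) - f (fun _ => 0, 0)))]
          have h3 := mul_le_mul_of_nonneg_left h2 (pottsRho_pos β hM i x).le
          have h4 := mul_le_mul_of_nonneg_right h1 (sq_nonneg (f (x, 0) - f (fun _ => 0, 0)))
          linarith
      _ = 2 * N * ∑ x, pottsRho n M β 0 x * (f (x, 0) - f (fun _ => 0, 0)) ^ 2 +
            2 * ∑ x, pottsRho n M β i x * (f (x, i) - f (x, 0)) ^ 2 := by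
          rw [sum_add_distrib, ← mul_sum, ← mul_sum]
      _ ≤ 2 * N * (N * ((n : ℝ) ^ 2 * (6 * (n : ℝ) ^ 4 * (M + 1) * E))) +
            2 * (4 * N * (M : ℝ) ^ 2 * (M + 1) * E) := by gcongr
      _ = _ := by ring
  rw [Fintype.sum_prod_type, sum_comm]
  have h7 : ∀ i : Fin (M + 1),
      ∑ x, flatStat n M β (x, i) * (f (x, i) - f (fun _ => 0, 0)) ^ 2 =
      (∑ x, pottsRho n M β i x * (f (x, i) - f (fun _ => 0, 0)) ^ 2) / (M + 1) := by
    intro i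
    rw [sum_div]
    exact sum_congr rfl fun x _ => by simp only [flatStat]; ring
  simp only [h7, ← sum_div]
  rw [div_le_iff₀ hM1]
  refine (sum_le_sum fun i _ => hlevel i).trans (le_of_eq ?_)
  simp
  ring

end Poincare

/-! ### Polynomial bounds and conclusion -/

theorem flatStat_lower {n M : ℕ} (hn : 0 < n) {μ : ℝ} (hμ : 0 < μ) (hM : 0 < M)
    (p : (Fin n → Fin 3) × Fin (M + 1)) :
    Real.exp (-(2 * (n : ℝ) ^ 2 + μ * n + 3 * n + M)) ≤ flatStat n M (μ / n) p := by
  have h1 := pottsRho_lower hn hμ hM p.2 p.1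
  have h2 : (M : ℝ) + 1 ≤ Real.exp M := Real.add_one_le_exp _
  rw [neg_add, Real.exp_add, Real.exp_neg (M : ℝ), ← div_eq_mul_inv]
  exact div_le_div₀ (pottsRho_pos _ hM _ _).le h1 (by positivity) h2

/-- Every constant of the argument is absorbed into a power of `n`, using `n ≥ 2`. -/
theorem polynomial_time_bound {n M k b : ℕ} (hn : 2 ≤ n) (hMk : M ≤ n ^ k) {μ L : ℝ}
    (hμ : 0 < μ) (hb : μ ≤ 2 ^ b) (hL : 0 ≤ L) :
    6 * (12 * (((n : ℝ) + 1) ^ 3) ^ 2 * (n : ℝ) ^ 6 * (M + 1) +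
        8 * ((n : ℝ) + 1) ^ 3 * (M : ℝ) ^ 2 * (M + 1)) *
      (2 * (n : ℝ) ^ 2 + μ * n + 3 * n + M + 2 * L) + 1 ≤
    (n : ℝ) ^ (33 + 4 * k + b) * (1 + L) := by
  have hn2 : (2 : ℝ) ≤ n := by exact_mod_cast hn
  have hn1 : (1 : ℝ) ≤ n := by linarith
  have hn0 : (0 : ℝ) < n := by linarith
  have hM : (M : ℝ) ≤ (n : ℝ) ^ k := by exact_mod_cast hMk
  have hpow : ∀ {a c : ℕ}, a ≤ c → (n : ℝ) ^ a ≤ (n : ℝ) ^ c := fun h => pow_le_pow_right₀ hn1 h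
  have htwo : ∀ a : ℕ, (2 : ℝ) ^ a ≤ (n : ℝ) ^ a := fun a => by gcongr
  have hM1 : (M : ℝ) + 1 ≤ (n : ℝ) ^ (k + 1) := by
    have : (1 : ℝ) ≤ (n : ℝ) ^ k := one_le_pow₀ hn1
    rw [pow_succ]; nlinarith
  have hN : (n : ℝ) + 1 ≤ (n : ℝ) ^ 2 := by nlinarith
  set C : ℝ := 12 * (((n : ℝ) + 1) ^ 3) ^ 2 * (n : ℝ) ^ 6 * (M + 1) +
        8 * ((n : ℝ) + 1) ^ 3 * (M : ℝ) ^ 2 * (M + 1) with hCdef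
  have hC : C ≤ (n : ℝ) ^ (24 + 3 * k) := by
    calc C ≤ 12 * ((((n : ℝ) ^ 2) ^ 3) ^ 2 * (n : ℝ) ^ 6 * (n : ℝ) ^ (k + 1)) +
          8 * (((n : ℝ) ^ 2) ^ 3 * ((n : ℝ) ^ k) ^ 2 * (n : ℝ) ^ (k + 1)) := by
          rw [hCdef]
          simp only [← mul_assoc]
          gcongr
      _ = 12 * (n : ℝ) ^ (19 + k) + 8 * (n : ℝ) ^ (7 + 3 * k) := by ring
      _ ≤ 12 * (n : ℝ) ^ (19 + 3 * k) + 8 * (n : ℝ) ^ (19 + 3 * k) := by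
          gcongr <;> first | exact hn1 | omega
      _ ≤ 2 ^ 5 * (n : ℝ) ^ (19 + 3 * k) := by
          have : 0 < (n : ℝ) ^ (19 + 3 * k) := by positivity
          linarith
      _ ≤ (n : ℝ) ^ 5 * (n : ℝ) ^ (19 + 3 * k) := by gcongr
      _ = _ := by ring
  have ha : 2 * (n : ℝ) ^ 2 + μ * n + 3 * n + M + 2 ≤ (n : ℝ) ^ (6 + b + k) := by
    have e1 : (n : ℝ) ^ 2 ≤ (n : ℝ) ^ (2 + b + k) := hpow (by omega)
    have e2 : μ * n ≤ (n : ℝ) ^ (2 + b + k) := by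
      calc μ * n ≤ (n : ℝ) ^ b * n := by gcongr; exact hb.trans (htwo b)
        _ = (n : ℝ) ^ (b + 1) := by ring
        _ ≤ _ := hpow (by omega)
    have e3 : (n : ℝ) ≤ (n : ℝ) ^ (2 + b + k) := by
      calc (n : ℝ) = (n : ℝ) ^ 1 := by ring
        _ ≤ _ := hpow (by omega)
    have e4 : (M : ℝ) ≤ (n : ℝ) ^ (2 + b + k) := hM.trans (hpow (by omega))
    have e5 : (1 : ℝ) ≤ (n : ℝ) ^ (2 + b + k) := one_le_pow₀ hn1
    calc _ ≤ 2 ^ 4 * (n : ℝ) ^ (2 + b + k) := by linarith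
      _ ≤ (n : ℝ) ^ 4 * (n : ℝ) ^ (2 + b + k) := by gcongr
      _ = _ := by ring
  have hC0 : 0 ≤ C := by positivity
  have h1 : 2 * (n : ℝ) ^ 2 + μ * n + 3 * n + M + 2 * L ≤ (n : ℝ) ^ (6 + b + k) * (1 + L) := by
    have h0 : 0 ≤ 2 * (n : ℝ) ^ 2 + μ * n + 3 * n + M := by positivity
    calc _ ≤ (2 * (n : ℝ) ^ 2 + μ * n + 3 * n + M + 2) * (1 + L) := by nlinarith
      _ ≤ _ := by gcongr
  have h2 : (1 : ℝ) ≤ (n : ℝ) ^ (30 + 4 * k + b) * (1 + L) := by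
    have := one_le_pow₀ (n := 30 + 4 * k + b) hn1
    nlinarith
  calc _ ≤ 6 * (n : ℝ) ^ (24 + 3 * k) * ((n : ℝ) ^ (6 + b + k) * (1 + L)) +
        (n : ℝ) ^ (30 + 4 * k + b) * (1 + L) := by gcongr
    _ = 7 * ((n : ℝ) ^ (30 + 4 * k + b) * (1 + L)) := by ring
    _ ≤ 2 ^ 3 * ((n : ℝ) ^ (30 + 4 * k + b) * (1 + L)) := by linarith
    _ ≤ (n : ℝ) ^ 3 * ((n : ℝ) ^ (30 + 4 * k + b) * (1 + L)) := by gcongr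
    _ = _ := by ring

/-- for every `μ > 0` and `k ≥ 1` there is `c₈ > 0` such that for all
`n ≥ 2` and every `M` with `n ≤ M ≤ n^k`, setting `β = μ/n`, the Flat-tempering chain
for the 3-state mean-field Potts model with the entropy-dampening distributions
`ρ₀,…,ρ_M` has mixing time `τ(ε) ≤ n^(c₈)·(1 + ln(1/ε))` for every `ε ∈ (0,1)`. -/
theorem flat_tempering_potts_polynomial_mixing :
    ∀ μ : ℝ, 0 < μ → ∀ k : ℕ, 1 ≤ k → ∃ c₈ : ℝ, 0 < c₈ ∧
      ∀ n : ℕ, 2 ≤ n → ∀ M : ℕ, n ≤ M → M ≤ n ^ k →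
        ∀ ε : ℝ, 0 < ε → ε < 1 →
          (mixingTime
              (temperingChain
                (fun i : Fin (M+1) =>
                  metropolis (pottsProp n) (pottsRho n M (μ / n) i))
                (pottsRho n M (μ / n)))
              (fun p : (Fin n → Fin 3) × Fin (M+1) =>
                pottsRho n M (μ / n) p.2 p.1 / (M + 1)) ε : ℝ) ≤
            (n : ℝ) ^ c₈ * (1 + Real.log (1 / ε)) := by
  intro μ hμ k _
  obtain ⟨b, hb⟩ := pow_unbounded_of_one_lt μ (one_lt_two : (1 : ℝ) < 2)
  refine ⟨((33 + 4 * k + b : ℕ) : ℝ), by positivity, ?_⟩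
  intro n hn M hnM hMk ε hε hε1
  have hn0 : 0 < n := by omega
  have hM0 : 0 < M := by omega
  have hL : 0 ≤ Real.log (1 / ε) := Real.log_nonneg (by rw [le_div_iff₀ hε]; linarith)
  set C : ℝ := 12 * (((n : ℝ) + 1) ^ 3) ^ 2 * (n : ℝ) ^ 6 * (M + 1) +
        8 * ((n : ℝ) + 1) ^ 3 * (M : ℝ) ^ 2 * (M + 1) with hC
  have hC0 : 0 < C := by positivity
  set a : ℝ := 2 * (n : ℝ) ^ 2 + μ * n + 3 * n + M with ha
  have hle : mixingTime (flatChain n M (μ / n)) (flatStat n M (μ / n)) ε ≤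
      ⌈6 * C * (a + 2 * Real.log (1 / ε))⌉₊ := by
    refine Nat.sInf_le fun t ht x => ?_
    refine poincare_mixing (C := C) (a := a) (flatStat_pos _ hM0) (sum_flatStat _ hM0)
      (flatChain_nonneg _ hn0 hM0) (flatChain_row _) (flatChain_rev _ hM0)
      (flatChain_lazy _ hn0 hM0) hC0
      (fun f => ⟨_, flatChain_poincare _ hn0 hM0 f⟩) (flatStat_lower hn0 hμ hM0) hε t ?_ x
    exact (Nat.le_ceil _).trans (by exact_mod_cast ht)
  have hceil : (⌈6 * C * (a + 2 * Real.log (1 / ε))⌉₊ : ℝ) ≤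
      6 * C * (a + 2 * Real.log (1 / ε)) + 1 := (Nat.ceil_lt_add_one (by positivity)).le
  rw [Real.rpow_natCast]
  exact (Nat.cast_le.mpr hle).trans
    (hceil.trans (polynomial_time_bound hn hMk hμ hb.le hL))
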